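/- The following problem is undecidable: given a fact base F, a rule set R that is the union of an aGRD set of existential rules and a single transitivity rule, and an atomic Boolean conjunctive query Q, decide whether F, R ⊨ Q. (Atomic CQ entailment over aGRD+trans knowledge bases is undecidable, even with a single transitivity rule.) -/

import Mathlib

set_option autoImplicit false

/-! ## First-order vocabulary: terms, atoms, existential rules -/

/-- Terms: variables and constants, both indexed by natural numbers. -/
inductive FTerm where
  | var : ℕ → FTerm
  | const : ℕ → FTerm
deriving DecidableEq

instance : Inhabited FTerm := ⟨.var 0⟩

def FTerm.equivSum : FTerm ≃ ℕ ⊕ ℕ where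
  toFun t := match t with | .var n => .inl n | .const n => .inr n
  invFun s := match s with | .inl n => .var n | .inr n => .const n
  left_inv t := by cases t <;> rfl
  right_inv s := by cases s <;> rfl

instance : Primcodable FTerm := Primcodable.ofEquiv (ℕ ⊕ ℕ) FTerm.equivSum

/-- A (function-free) atom: a predicate applied to a list of terms. -/
structure FAtom where
  pred : ℕ
  args : List FTerm
deriving DecidableEq

def FAtom.equivProd : FAtom ≃ ℕ × List FTerm where
  toFun a := (a.pred, a.args)
  invFun p := ⟨p.1, p.2⟩
  left_inv a := rfl
  right_inv p := rfl

instance : Primcodable FAtom := Primcodable.ofEquiv (ℕ × List FTerm) FAtom.equivProd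

/-- An existential rule `B → H`, given by its body and head (finite conjunctions of atoms).
Variables occurring in the head but not in the body are (implicitly) existentially
quantified; all other variables are universally quantified. -/
structure ERule where
  body : List FAtom
  head : List FAtom
deriving DecidableEq

def ERule.equivProd : ERule ≃ List FAtom × List FAtom where
  toFun r := (r.body, r.head)
  invFun p := ⟨p.1, p.2⟩
  left_inv r := rfl
  right_inv p := rfl

instance : Primcodable ERule := Primcodable.ofEquiv (List FAtom × List FAtom) ERule.equivProd

/-! ## Semantics -/

/-- A first-order interpretation. -/
structure Interp where
  Dom : Type
  inh : Nonempty Dom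
  rel : ℕ → List Dom → Prop
  cst : ℕ → Dom

def FTerm.eval (I : Interp) (ν : ℕ → I.Dom) : FTerm → I.Dom
  | .var n => ν n
  | .const n => I.cst n

def FAtom.sat (I : Interp) (ν : ℕ → I.Dom) (a : FAtom) : Prop :=
  I.rel a.pred (a.args.map (FTerm.eval I ν))

/-- Satisfaction of a Boolean conjunctive query (existential closure of a conjunction). -/
def satCQ (I : Interp) (Q : List FAtom) : Prop := ∃ ν, ∀ a ∈ Q, a.sat I ν

def satFacts (I : Interp) (F : List FAtom) : Prop := ∀ ν, ∀ a ∈ F, a.sat I ν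

def atomsVars (l : List FAtom) : Set ℕ := {v | ∃ a ∈ l, FTerm.var v ∈ a.args}
def atomsTerms (l : List FAtom) : Set FTerm := {t | ∃ a ∈ l, t ∈ a.args}
def atomsPreds (l : List FAtom) : Set ℕ := {q | ∃ a ∈ l, a.pred = q}
def rulesPreds (Rs : List ERule) : Set ℕ := {q | ∃ r ∈ Rs, q ∈ atomsPreds (r.body ++ r.head)}
def atomsConsts (l : List FAtom) : Set ℕ := {c | FTerm.const c ∈ atomsTerms l}

/-- Frontier variables of a rule. -/
def ERule.frontierV (R : ERule) : Set ℕ := atomsVars R.body ∩ atomsVars R.head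
/-- Existential variables of a rule. -/
def ERule.exV (R : ERule) : Set ℕ := atomsVars R.head \ atomsVars R.body

def ERule.sat (I : Interp) (R : ERule) : Prop :=
  ∀ ν, (∀ a ∈ R.body, a.sat I ν) →
    ∃ ν', (∀ v ∈ atomsVars R.body, ν' v = ν v) ∧ ∀ a ∈ R.head, a.sat I ν'

/-- First-order entailment of a Boolean CQ from a knowledge base. -/
def entails (F : List FAtom) (Rs : List ERule) (Q : List FAtom) : Prop :=
  ∀ I : Interp, satFacts I F → (∀ r ∈ Rs, r.sat I) → satCQ I Q

/-- First-order entailment of a union of Boolean CQs. -/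
def entailsUCQ (F : List FAtom) (Rs : List ERule) (Qs : List (List FAtom)) : Prop :=
  ∀ I : Interp, satFacts I F → (∀ r ∈ Rs, r.sat I) → ∃ Q ∈ Qs, satCQ I Q

def FAtom.isGround (a : FAtom) : Prop := ∀ t ∈ a.args, ∃ c, t = FTerm.const c
def isFactBase (F : List FAtom) : Prop := ∀ a ∈ F, a.isGround

/-! ## Substitutions and piece-unifiers -/

def FTerm.subst (σ : ℕ → FTerm) : FTerm → FTerm
  | .var n => σ n
  | .const n => .const n

def FAtom.subst (σ : ℕ → FTerm) (a : FAtom) : FAtom := ⟨a.pred, a.args.map (FTerm.subst σ)⟩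

/-- A piece-unifier of a CQ `Q` with a rule `R`, presented by a unifying substitution `σ`
(obtained from the admissible partition of the terms of `piece ∪ hpiece`):
`σ(piece) = σ(hpiece)` and every term merged with an existential variable of `R`
is a variable of the piece not occurring in the rest of `Q`. -/
structure PieceUnifier (Q : List FAtom) (R : ERule) where
  piece : List FAtom
  hpiece : List FAtom
  σ : ℕ → FTerm
  piece_ne : piece ≠ []
  piece_sub : ∀ a ∈ piece, a ∈ Q
  hpiece_sub : ∀ a ∈ hpiece, a ∈ R.head
  unif : {x : FAtom | ∃ b ∈ piece, x = b.subst σ} = {x : FAtom | ∃ b ∈ hpiece, x = b.subst σ}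
  exCond : ∀ z ∈ R.exV, ∀ t ∈ atomsTerms (piece ++ hpiece),
      FTerm.subst σ t = σ z → t ≠ FTerm.var z →
      ∃ v, t = FTerm.var v ∧ FTerm.var v ∈ atomsTerms piece ∧
        FTerm.var v ∉ atomsTerms (Q.filter (fun a => decide (a ∉ piece)))

def pieceUnifiable (Q : List FAtom) (R : ERule) : Prop := Nonempty (PieceUnifier Q R)

/-- `R₂` depends on `R₁` if there is a piece-unifier of the body of `R₂` with the head of `R₁`. -/
def ruleDependsOn (R₂ R₁ : ERule) : Prop := pieceUnifiable R₂.body R₁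

/-- A rule set is aGRD if its graph of rule dependencies (edge from `R₁` to `R₂`
whenever `R₂` depends on `R₁`) is acyclic. -/
def isAGRD (Rs : List ERule) : Prop :=
  ∀ r ∈ Rs, ¬ Relation.TransGen (fun r₁ r₂ => r₁ ∈ Rs ∧ r₂ ∈ Rs ∧ ruleDependsOn r₂ r₁) r r

/-- The (classical) direct rewriting of `Q` with `R` w.r.t. a piece-unifier `μ`
is `σ(Q ∖ piece) ∪ σ(body R)` (as a set of atoms). -/
def directRewriting (Q Q' : List FAtom) (R : ERule) : Prop :=
  ∃ μ : PieceUnifier Q R,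
    {x : FAtom | x ∈ Q'} =
      {x | ∃ b ∈ Q.filter (fun a => decide (a ∉ μ.piece)), x = b.subst μ.σ} ∪
      {x | ∃ b ∈ R.body, x = b.subst μ.σ}

/-- `Q'` is a rewriting of `Q` w.r.t. the rule set `Rs`: a finite sequence of direct rewritings. -/
def isRewriting (Rs : List ERule) (Q Q' : List FAtom) : Prop :=
  Relation.ReflTransGen (fun q q' => ∃ r ∈ Rs, directRewriting q q' r) Q Q'

/-! ## Transitivity and linear rules -/

/-- `R` is the transitivity rule `p(x,y) ∧ p(y,z) → p(x,z)` for predicate `p`. -/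
def isTransitivityRuleOn (p : ℕ) (R : ERule) : Prop :=
  ∃ x y z : ℕ, x ≠ y ∧ y ≠ z ∧ x ≠ z ∧
    R.body = [⟨p, [.var x, .var y]⟩, ⟨p, [.var y, .var z]⟩] ∧
    R.head = [⟨p, [.var x, .var z]⟩]

def isTransitivityRule (R : ERule) : Prop := ∃ p, isTransitivityRuleOn p R

/-- A canonical transitivity rule for predicate `p`. -/
def transRule (p : ℕ) : ERule :=
  ⟨[⟨p, [.var 0, .var 1]⟩, ⟨p, [.var 1, .var 2]⟩], [⟨p, [.var 0, .var 2]⟩]⟩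

/-- A linear rule: single-atom body and no constants. -/
def isLinearRule (R : ERule) : Prop :=
  (∃ a, R.body = [a]) ∧ ∀ t ∈ atomsTerms (R.body ++ R.head), ∀ c, t ≠ FTerm.const c

/-!
Entailment under arbitrary existential rules is undecidable, since such rules can simulate a
program on lists of numbers: they create lists freely, and the input-output relation of a program
is defined from those of its subprograms.

Transitivity lets an acyclic rule set imitate an arbitrary one. Every atom `q(t⃗)` gets a tag `u`
as additional argument, and a rule may use the atom only if `u` is linked to a constant `⊤`. The
head of a rule merely creates a tag `u` with links `u → w → ⊤` through a fresh `w`. Transitivity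
closes these to `u → ⊤`, so the rules apply as before. But a single rule application never
produces a link from `u` to `⊤`, so no rule depends on another: a unifier involving a body atom
has to involve the link of its tag, which can only be unified with `w → ⊤`, and then the tag is
identified with both `u` and `w`.
-/

open Encodable

namespace FTerm

theorem eval_subst (I : Interp) (ν : ℕ → I.Dom) (σ : ℕ → FTerm) (t : FTerm) :
    (t.subst σ).eval I ν = t.eval I fun v => (σ v).eval I ν := by
  cases t <;> rfl

end FTerm

theorem FAtom.sat_congr {I : Interp} {a : FAtom} {ν ν' : ℕ → I.Dom}
    (h : ∀ v, .var v ∈ a.args → ν v = ν' v) : a.sat I ν ↔ a.sat I ν' := by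
  have hargs : a.args.map (FTerm.eval I ν) = a.args.map (FTerm.eval I ν') := by
    refine List.map_congr_left fun t ht => ?_
    cases t with
    | var v => exact h v ht
    | const c => rfl
  rw [FAtom.sat, FAtom.sat, hargs]

namespace ERule

variable {R : ERule} {I : Interp}

theorem sat_of_forall_valuation
    (h : ∀ ν, (∀ a ∈ R.body, a.sat I ν) → ∀ a ∈ R.head, a.sat I ν) : R.sat I :=
  fun ν hν => ⟨ν, fun _ _ => rfl, h ν hν⟩

theorem sat.head_of_exV_eq_empty (hR : R.sat I) (hex : R.exV = ∅) (ν : ℕ → I.Dom)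
    (hν : ∀ a ∈ R.body, a.sat I ν) : ∀ a ∈ R.head, a.sat I ν := by
  obtain ⟨ν', hagree, hhead⟩ := hR ν hν
  intro a ha
  refine (FAtom.sat_congr fun v hv => ?_).1 (hhead a ha)
  exact hagree v (Set.sdiff_eq_empty.1 hex ⟨a, ha, hv⟩)

end ERule

namespace PieceUnifier

variable {Q : List FAtom} {R : ERule}

theorem exists_subst_eq (μ : PieceUnifier Q R) {b : FAtom} (hb : b ∈ μ.piece) :
    ∃ h ∈ μ.hpiece, b.subst μ.σ = h.subst μ.σ :=
  μ.unif.subset ⟨b, hb, rfl⟩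

theorem mem_piece_of_subst_eq (μ : PieceUnifier Q R) {z : ℕ} (hz : z ∈ R.exV) {t : FTerm}
    (ht : t ∈ atomsTerms (μ.piece ++ μ.hpiece)) (heq : t.subst μ.σ = μ.σ z) (hne : t ≠ .var z) :
    (∃ v, t = .var v) ∧ t ∈ atomsTerms μ.piece ∧ ∀ a ∈ Q, t ∈ a.args → a ∈ μ.piece := by
  obtain ⟨v, rfl, hpiece, hrest⟩ := μ.exCond z hz t ht heq hne
  refine ⟨⟨v, rfl⟩, hpiece, fun a ha hta => ?_⟩
  by_contra hnot
  exact hrest ⟨a, List.mem_filter.2 ⟨ha, decide_eq_true hnot⟩, hta⟩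

end PieceUnifier

theorem isAGRD_of_forall_not_ruleDependsOn {Rs : List ERule}
    (h : ∀ R₁ ∈ Rs, ∀ R₂ ∈ Rs, ¬ ruleDependsOn R₂ R₁) : isAGRD Rs := by
  intro R _ hcycle
  obtain ⟨R', -, hR', hR, hdep⟩ := Relation.TransGen.tail'_iff.1 hcycle
  exact h R' hR' R hR hdep

theorem isTransitivityRule_transRule (p : ℕ) : isTransitivityRule (transRule p) :=
  ⟨p, 0, 1, 2, by decide, by decide, by decide, rfl, rfl⟩

theorem rel_trans_of_transRule_sat {I : Interp} {p : ℕ} (h : (transRule p).sat I) {x y z : I.Dom}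
    (hxy : I.rel p [x, y]) (hyz : I.rel p [y, z]) : I.rel p [x, z] := by
  have hex : (transRule p).exV = ∅ := by
    simp [ERule.exV, transRule, atomsVars, Set.sdiff_eq_empty, Set.subset_def]
  simpa [transRule, FAtom.sat, FTerm.eval] using
    h.head_of_exV_eq_empty hex (fun k => [x, y, z].getD k x)
      (by simp [transRule, FAtom.sat, FTerm.eval, hxy, hyz])

/-! ## Linking -/

/-- The variables of a linked rule: those of the original rule, one tag for each body atom, and the
two existential variables created by the head. -/
inductive LinkVar where
  | orig (v : ℕ)
  | tag (a : FAtom)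
  | fresh
  | mid
deriving Encodable

/-- The variable of the object language standing for a `LinkVar`. -/
def LinkVar.term (x : LinkVar) : FTerm := .var (encode x)

theorem LinkVar.eval_term (I : Interp) (ν : ℕ → I.Dom) (x : LinkVar) :
    x.term.eval I ν = ν (encode x) := rfl

theorem LinkVar.term_injective : Function.Injective LinkVar.term :=
  fun _ _ h => encode_injective (FTerm.var.inj h)

/-- The constant every tag has to be linked to. -/
def anchor : FTerm := .const 0

/-- The link relation, predicate `0`, is the one made transitive; predicate `q` of the original
vocabulary becomes `q + 1`. -/
def linkAtom (s t : FTerm) : FAtom := ⟨0, [s, t]⟩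

/-- The atom `q(t₁, …, tₖ)` with the tag `x` as additional first argument. -/
def FAtom.withTag (x : LinkVar) (a : FAtom) : FAtom :=
  ⟨a.pred + 1, x.term :: a.args.map (FTerm.subst fun v => (LinkVar.orig v).term)⟩

/-- The linked form of a rule. A body atom has to carry a tag linked to the anchor, whereas the head
only creates a tag that is two links away from the anchor: transitivity is needed in between. -/
def ERule.link (R : ERule) : ERule where
  body := R.body.flatMap fun a => [a.withTag (.tag a), linkAtom (LinkVar.tag a).term anchor]
  head := linkAtom LinkVar.fresh.term LinkVar.mid.term :: linkAtom LinkVar.mid.term anchor ::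
    R.head.map (FAtom.withTag .fresh)

/-- The linked form of a fact base, in which the anchor serves as the tag of every fact. -/
def linkFacts (F : List FAtom) : List FAtom :=
  linkAtom anchor anchor :: F.map fun a => ⟨a.pred + 1, anchor :: a.args⟩

/-! ## Acyclicity of linked rules -/

namespace ERule

variable {R R₁ R₂ : ERule}

theorem mem_link_body {b : FAtom} : b ∈ R.link.body ↔
    ∃ a ∈ R.body, b = a.withTag (.tag a) ∨ b = linkAtom (LinkVar.tag a).term anchor := by
  simp [link]

theorem mem_link_head {b : FAtom} : b ∈ R.link.head ↔
    b = linkAtom LinkVar.fresh.term LinkVar.mid.term ∨ b = linkAtom LinkVar.mid.term anchor ∨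
      ∃ a ∈ R.head, b = a.withTag .fresh := by
  simp [link, eq_comm]

theorem term_mem_atomsTerms_link_body {x : LinkVar} (h : x.term ∈ atomsTerms R.link.body) :
    (∃ v, x = .orig v ∧ v ∈ atomsVars R.body) ∨ ∃ a, x = .tag a := by
  obtain ⟨b, hb, hx⟩ := h
  obtain ⟨a, ha, rfl | rfl⟩ := mem_link_body.1 hb
  · rcases List.mem_cons.1 hx with hx | hx
    · exact .inr ⟨a, LinkVar.term_injective hx⟩
    · obtain ⟨t, ht, htx⟩ := List.mem_map.1 hx
      cases t with
      | var v => exact .inl ⟨v, (LinkVar.term_injective htx).symm, a, ha, ht⟩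
      | const c => cases htx
  · simp only [linkAtom, anchor, LinkVar.term, List.mem_cons, List.not_mem_nil, or_false,
      reduceCtorEq, FTerm.var.injEq] at hx
    exact .inr ⟨a, encode_injective hx⟩

theorem fresh_notMem_link_body : LinkVar.fresh.term ∉ atomsTerms R.link.body := fun h => by
  simpa using term_mem_atomsTerms_link_body h

theorem mid_notMem_link_body : LinkVar.mid.term ∉ atomsTerms R.link.body := fun h => by
  simpa using term_mem_atomsTerms_link_body h

theorem fresh_mem_exV_link : encode LinkVar.fresh ∈ R.link.exV :=
  ⟨⟨_, mem_link_head.2 (.inl rfl), List.mem_cons_self⟩, fresh_notMem_link_body⟩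

theorem mid_mem_exV_link : encode LinkVar.mid ∈ R.link.exV :=
  ⟨⟨_, mem_link_head.2 (.inr (.inl rfl)), List.mem_cons_self⟩, mid_notMem_link_body⟩

variable (μ : PieceUnifier R₂.link.body R₁.link)

theorem subst_tag_eq_of_withTag_mem_piece {a : FAtom} (ha : a.withTag (.tag a) ∈ μ.piece) :
    (LinkVar.tag a).term.subst μ.σ = μ.σ (encode LinkVar.fresh) ∧
      LinkVar.fresh.term ∈ atomsTerms μ.hpiece := by
  obtain ⟨h, hh, heq⟩ := μ.exists_subst_eq ha
  obtain rfl | rfl | ⟨a', -, rfl⟩ := mem_link_head.1 (μ.hpiece_sub h hh)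
  · simp [FAtom.withTag, linkAtom, FAtom.subst] at heq
  · simp [FAtom.withTag, linkAtom, FAtom.subst] at heq
  · simp only [FAtom.withTag, FAtom.subst, List.map_cons, FAtom.mk.injEq, List.cons.injEq] at heq
    exact ⟨heq.2.1, _, hh, List.mem_cons_self⟩

theorem linkAtom_notMem_piece {a : FAtom} (haR : a ∈ R₂.body) :
    linkAtom (LinkVar.tag a).term anchor ∉ μ.piece := by
  intro ha
  have hterm {t : FTerm} (ht : t ∈ [(LinkVar.tag a).term, anchor]) :
      t ∈ atomsTerms (μ.piece ++ μ.hpiece) := ⟨_, List.mem_append_left _ ha, ht⟩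
  obtain ⟨h, hh, heq⟩ := μ.exists_subst_eq ha
  obtain rfl | rfl | ⟨a', -, rfl⟩ := mem_link_head.1 (μ.hpiece_sub h hh) <;>
    simp only [linkAtom, FAtom.withTag, FAtom.subst, List.map_cons, FAtom.mk.injEq,
      List.cons.injEq] at heq
  · obtain ⟨⟨v, hv⟩, -⟩ :=
      μ.mem_piece_of_subst_eq mid_mem_exV_link (hterm (by simp)) heq.2.2.1 (by simp [anchor])
    simp [anchor] at hv
  · have hmid : (LinkVar.tag a).term.subst μ.σ = μ.σ (encode LinkVar.mid) := heq.2.1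
    have htag : a.withTag (.tag a) ∈ μ.piece :=
      (μ.mem_piece_of_subst_eq mid_mem_exV_link (hterm (by simp)) hmid
        (LinkVar.term_injective.ne (by simp))).2.2 _
        (mem_link_body.2 ⟨a, haR, .inl rfl⟩) List.mem_cons_self
    obtain ⟨hfresh, h', hh', hmem⟩ := subst_tag_eq_of_withTag_mem_piece μ htag
    obtain ⟨b, hb, hfb⟩ :=
      (μ.mem_piece_of_subst_eq mid_mem_exV_link ⟨h', List.mem_append_right _ hh', hmem⟩
        (hfresh.symm.trans hmid) (LinkVar.term_injective.ne (by simp))).2.1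
    exact fresh_notMem_link_body ⟨b, μ.piece_sub b hb, hfb⟩
  · simp at heq

theorem not_ruleDependsOn_link : ¬ ruleDependsOn R₂.link R₁.link := by
  rintro ⟨μ⟩
  obtain ⟨b, hb⟩ := List.exists_mem_of_ne_nil _ μ.piece_ne
  obtain ⟨a, haR, rfl | rfl⟩ := mem_link_body.1 (μ.piece_sub b hb)
  · refine linkAtom_notMem_piece μ haR ?_
    exact (μ.mem_piece_of_subst_eq fresh_mem_exV_link
      ⟨_, List.mem_append_left _ hb, List.mem_cons_self⟩
      (subst_tag_eq_of_withTag_mem_piece μ hb).1 (LinkVar.term_injective.ne (by simp))).2.2 _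
      (mem_link_body.2 ⟨a, haR, .inr rfl⟩) List.mem_cons_self
  · exact linkAtom_notMem_piece μ haR hb

theorem isAGRD_map_link (Rs : List ERule) : isAGRD (Rs.map link) := by
  refine isAGRD_of_forall_not_ruleDependsOn fun R₁ h₁ R₂ h₂ => ?_
  obtain ⟨R₁, -, rfl⟩ := List.mem_map.1 h₁
  obtain ⟨R₂, -, rfl⟩ := List.mem_map.1 h₂
  exact not_ruleDependsOn_link

end ERule

/-! ## Correctness of linking -/

/-- A valuation of the variables of linked rules, as a valuation of the variables they are encoded
by. -/
noncomputable def LinkVar.valuation {I : Interp} (g : LinkVar → I.Dom) : ℕ → I.Dom :=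
  Function.extend encode g fun _ => I.cst 0

@[simp]
theorem LinkVar.valuation_encode {I : Interp} (g : LinkVar → I.Dom) (x : LinkVar) :
    valuation g (encode x) = g x :=
  encode_injective.extend_apply g _ x

namespace Interp

/-- The original vocabulary read off a model of the linked rules: a tuple belongs to `q` if it does
so with some tag linked to the anchor. -/
abbrev unlink (J : Interp) : Interp where
  Dom := J.Dom
  inh := J.inh
  rel q xs := ∃ u, J.rel (q + 1) (u :: xs) ∧ J.rel 0 [u, J.cst 0]
  cst := J.cst

/-- The expansion of an interpretation in which everything is linked and every tag is admissible. -/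
abbrev link (I : Interp) : Interp where
  Dom := I.Dom
  inh := I.inh
  rel
    | 0, _ => True
    | q + 1, xs => I.rel q xs.tail
  cst := I.cst

end Interp

theorem FTerm.eval_unlink {J : Interp} (ν : ℕ → J.Dom) : eval J.unlink ν = eval J ν := by
  ext t
  cases t <;> rfl

theorem FTerm.eval_link {I : Interp} (ν : ℕ → I.Dom) : eval I.link ν = eval I ν := by
  ext t
  cases t <;> rfl

theorem eval_anchor (I : Interp) (ν : ℕ → I.Dom) : anchor.eval I ν = I.cst 0 := rfl

theorem sat_linkAtom {I : Interp} {ν : ℕ → I.Dom} {s t : FTerm} :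
    (linkAtom s t).sat I ν ↔ I.rel 0 [s.eval I ν, t.eval I ν] :=
  Iff.rfl

namespace FAtom

variable {I J : Interp} {x : LinkVar} {a : FAtom}

theorem sat_unlink {ν : ℕ → J.Dom} : a.sat J.unlink ν ↔
    ∃ u, J.rel (a.pred + 1) (u :: a.args.map (FTerm.eval J ν)) ∧ J.rel 0 [u, J.cst 0] := by
  rw [sat, FTerm.eval_unlink]

theorem sat_withTag {ν : ℕ → J.Dom} : (a.withTag x).sat J ν ↔ J.rel (a.pred + 1)
    (ν (encode x) :: a.args.map (FTerm.eval J fun v => ν (encode (LinkVar.orig v)))) := by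
  simp [sat, withTag, Function.comp_def, FTerm.eval_subst, LinkVar.eval_term]

theorem sat_withTag_link {ν : ℕ → I.Dom} : (a.withTag x).sat I.link ν ↔
    a.sat I fun v => ν (encode (LinkVar.orig v)) := by
  rw [sat_withTag, FTerm.eval_link]
  rfl

end FAtom

namespace ERule

theorem sat_unlink {J : Interp} (htrans : (transRule 0).sat J) {R : ERule} (hR : R.link.sat J) :
    R.sat J.unlink := by
  intro ν hbody
  simp only [FAtom.sat_unlink] at hbody
  have := J.inh
  choose! tag htag using hbody
  let g : LinkVar → J.Dom
    | .orig v => ν v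
    | .tag a => tag a
    | .fresh | .mid => J.cst 0
  have hlink : ∀ b ∈ R.link.body, b.sat J (LinkVar.valuation g) := by
    intro b hb
    obtain ⟨a, ha, rfl | rfl⟩ := mem_link_body.1 hb
    · simpa [FAtom.sat_withTag, g] using (htag a ha).1
    · simpa [sat_linkAtom, LinkVar.eval_term, eval_anchor, g] using (htag a ha).2
  obtain ⟨ν', hagree, hhead⟩ := hR _ hlink
  have hfresh : J.rel 0 [ν' (encode LinkVar.fresh), J.cst 0] :=
    rel_trans_of_transRule_sat htrans (sat_linkAtom.1 (hhead _ (mem_link_head.2 (.inl rfl))))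
      (sat_linkAtom.1 (hhead _ (mem_link_head.2 (.inr (.inl rfl)))))
  refine ⟨fun v => ν' (encode (LinkVar.orig v)), ?_, fun a ha => FAtom.sat_unlink.2
    ⟨ν' (encode LinkVar.fresh), FAtom.sat_withTag.1 (hhead _ ?_), hfresh⟩⟩
  · rintro v ⟨a, ha, hv⟩
    have hmem : encode (LinkVar.orig v) ∈ atomsVars R.link.body :=
      ⟨_, mem_link_body.2 ⟨a, ha, .inl rfl⟩, List.mem_cons_of_mem _ (List.mem_map.2 ⟨_, hv, rfl⟩)⟩
    exact (hagree _ hmem).trans (LinkVar.valuation_encode g _)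
  · exact mem_link_head.2 (.inr (.inr ⟨a, ha, rfl⟩))

theorem sat.link {I : Interp} {R : ERule} (hR : R.sat I) : R.link.sat I.link := by
  intro ν hbody
  obtain ⟨ν', hagree, hhead⟩ := hR (fun v => ν (encode (LinkVar.orig v))) fun a ha =>
    FAtom.sat_withTag_link.1 (hbody _ (mem_link_body.2 ⟨a, ha, .inl rfl⟩))
  have horig : Function.Injective fun v => encode (LinkVar.orig v) :=
    fun _ _ h => LinkVar.orig.inj (encode_injective h)
  refine ⟨Function.extend (fun v => encode (LinkVar.orig v)) ν' ν, fun n hn => ?_, fun b hb => ?_⟩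
  · by_cases hrange : ∃ v, encode (LinkVar.orig v) = n
    · obtain ⟨v, rfl⟩ := hrange
      have hv : v ∈ atomsVars R.body := by
        simpa using term_mem_atomsTerms_link_body (x := .orig v) hn
      exact (horig.extend_apply ν' ν v).trans (hagree v hv)
    · exact Function.extend_apply' _ _ _ hrange
  · obtain rfl | rfl | ⟨a, ha, rfl⟩ := mem_link_head.1 hb
    · trivial
    · trivial
    · simpa only [FAtom.sat_withTag_link, horig.extend_apply] using hhead a ha

end ERule

theorem transRule_zero_sat_link (I : Interp) : (transRule 0).sat I.link :=
  ERule.sat_of_forall_valuation fun ν _ => by simp [transRule, FAtom.sat]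

theorem satFacts_unlink {J : Interp} {F : List FAtom} (h : satFacts J (linkFacts F)) :
    satFacts J.unlink F := fun ν a ha =>
  FAtom.sat_unlink.2 ⟨J.cst 0, h ν _ (List.mem_cons_of_mem _ (List.mem_map.2 ⟨a, ha, rfl⟩)),
    h ν _ List.mem_cons_self⟩

theorem satFacts_link {I : Interp} {F : List FAtom} (h : satFacts I F) :
    satFacts I.link (linkFacts F) := by
  intro ν b hb
  obtain rfl | hb := List.mem_cons.1 hb
  · trivial
  · obtain ⟨a, ha, rfl⟩ := List.mem_map.1 hb
    simpa only [FAtom.sat, FTerm.eval_link, List.map_cons, List.tail_cons] using h ν a ha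

theorem entails_link_iff (F : List FAtom) (Rs : List ERule) (Q : FAtom) :
    entails (linkFacts F) (Rs.map ERule.link ++ [transRule 0]) [Q.withTag .fresh] ↔
      entails F Rs [Q] := by
  simp only [entails, satCQ, List.forall_mem_singleton, List.forall_mem_append,
    List.forall_mem_map]
  constructor
  · intro h I hF hRs
    obtain ⟨ν, hν⟩ := h I.link (satFacts_link hF)
      ⟨fun R hR => (hRs R hR).link, transRule_zero_sat_link I⟩
    exact ⟨_, FAtom.sat_withTag_link.1 hν⟩
  · rintro h J hF ⟨hRs, htrans⟩
    obtain ⟨ν, hν⟩ := h J.unlink (satFacts_unlink hF) fun R hR =>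
      ERule.sat_unlink htrans (hRs R hR)
    obtain ⟨u, hu, -⟩ := FAtom.sat_unlink.1 hν
    let g : LinkVar → J.Dom
      | .orig v => ν v
      | .fresh | .mid | .tag _ => u
    exact ⟨LinkVar.valuation g, FAtom.sat_withTag.2 (by simpa [g] using hu)⟩

/-! ## Simulating programs on lists of numbers -/

open Turing.ToPartrec (Code)

deriving instance Encodable for Code

/-- The predicates of the simulation, whose domain contains both numbers and lists of numbers;
`ListPred.Meaning` is their intended interpretation. -/
inductive ListPred where
  | elem
  | nil
  | zero
  | succ
  | cons
  | head
  | tail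
  | run (c : Code)
deriving Encodable

/-- The atom applying a predicate of the simulation to variables. -/
def ListPred.atom (P : ListPred) (vs : List ℕ) : FAtom := ⟨encode P, vs.map .var⟩

/-- The fact applying a predicate of the simulation to constants. -/
def ListPred.fact (P : ListPred) (cs : List ℕ) : FAtom := ⟨encode P, cs.map .const⟩

/-- Membership of a tuple in a predicate of the simulation. -/
def Interp.Holds (I : Interp) (P : ListPred) (ds : List I.Dom) : Prop := I.rel (encode P) ds

namespace ListPred

variable {I : Interp} {P : ListPred} {ν : ℕ → I.Dom}

@[simp]
theorem sat_atom {vs : List ℕ} : (P.atom vs).sat I ν ↔ I.Holds P (vs.map ν) := by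
  simp [FAtom.sat, atom, Interp.Holds, FTerm.eval, Function.comp_def]

@[simp]
theorem sat_fact {cs : List ℕ} : (P.fact cs).sat I ν ↔ I.Holds P (cs.map I.cst) := by
  simp [FAtom.sat, fact, Interp.Holds, FTerm.eval, Function.comp_def]

@[simp]
theorem var_mem_args_atom {v : ℕ} {vs : List ℕ} : .var v ∈ (P.atom vs).args ↔ v ∈ vs := by
  simp [atom]

theorem isGround_fact {cs : List ℕ} : (P.fact cs).isGround := by
  simp [FAtom.isGround, fact]

end ListPred

open ListPred

/-- The rules inventing successors and lists. -/
def creationRules : List ERule :=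
  [⟨[elem.atom [0]], [succ.atom [0, 1]]⟩,
    ⟨[elem.atom [0], elem.atom [1]], [cons.atom [0, 1, 2]]⟩]

/-- The rules deriving what is an element and what are the head and the tail of a list. As in
`List.headI`, the head of the empty list is zero. -/
def listRules : List ERule :=
  [⟨[nil.atom [0]], [elem.atom [0]]⟩,
    ⟨[zero.atom [0]], [elem.atom [0]]⟩,
    ⟨[succ.atom [0, 1]], [elem.atom [1]]⟩,
    ⟨[cons.atom [0, 1, 2]], [elem.atom [2]]⟩,
    ⟨[nil.atom [0], zero.atom [1]], [head.atom [0, 1]]⟩,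
    ⟨[cons.atom [0, 1, 2]], [head.atom [2, 0]]⟩,
    ⟨[nil.atom [0]], [tail.atom [0, 0]]⟩,
    ⟨[cons.atom [0, 1, 2]], [tail.atom [2, 1]]⟩]

/-- The conditions, one for each case of the definition of `Code.eval`, under which `c` maps the
list `0` to the list `1`. -/
def runBodies : Code → List (List FAtom)
  | .zero' => [[zero.atom [2], cons.atom [2, 0, 1]]]
  | .succ => [[head.atom [0, 2], succ.atom [2, 3], nil.atom [4], cons.atom [3, 4, 1]]]
  | .tail => [[tail.atom [0, 1]]]
  | .cons f g =>
    [[(run f).atom [0, 2], head.atom [2, 3], (run g).atom [0, 4], cons.atom [3, 4, 1]]]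
  | .comp f g => [[(run g).atom [0, 2], (run f).atom [2, 1]]]
  | .case f g =>
    [[head.atom [0, 2], zero.atom [2], tail.atom [0, 3], (run f).atom [3, 1]],
      [head.atom [0, 2], succ.atom [3, 2], tail.atom [0, 4], cons.atom [3, 4, 5],
        (run g).atom [5, 1]]]
  | .fix f =>
    [[(run f).atom [0, 2], head.atom [2, 3], zero.atom [3], tail.atom [2, 1]],
      [(run f).atom [0, 2], head.atom [2, 3], succ.atom [4, 3], tail.atom [2, 5],
        (run (.fix f)).atom [5, 1]]]

/-- The rules defining the input-output relation of `c` from those of its immediate subprograms. -/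
def runRules (c : Code) : List ERule := (runBodies c).map fun B => ⟨B, [(run c).atom [0, 1]]⟩

/-- The subprograms of a program. -/
def subcodes : Code → List Code
  | .cons f g => .cons f g :: (subcodes f ++ subcodes g)
  | .comp f g => .comp f g :: (subcodes f ++ subcodes g)
  | .case f g => .case f g :: (subcodes f ++ subcodes g)
  | .fix f => .fix f :: subcodes f
  | c => [c]

/-- The rules simulating a program. -/
def programRules (c : Code) : List ERule :=
  creationRules ++ listRules ++ (subcodes c).flatMap runRules

/-- The fact base describing the input `[n]`: constant `0` is this list, constant `1` is the empty
list and constant `k + 2` is the number `k`. -/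
def inputFacts (n : ℕ) : List FAtom :=
  nil.fact [1] :: zero.fact [2] :: cons.fact [n + 2, 1, 0] ::
    (List.range n).map fun k => succ.fact [k + 2, k + 3]

/-- The query asking whether a program has an output on the input list. -/
def haltsQuery (c : Code) : FAtom := ⟨encode (run c), [.const 0, .var 0]⟩

theorem sat_haltsQuery {I : Interp} {ν : ℕ → I.Dom} {c : Code} :
    (haltsQuery c).sat I ν ↔ I.Holds (run c) [I.cst 0, ν 0] :=
  Iff.rfl

theorem isFactBase_inputFacts (n : ℕ) : isFactBase (inputFacts n) := by
  simp [isFactBase, inputFacts, isGround_fact]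

theorem exV_eq_empty_of_mem_listRules : ∀ r ∈ listRules, r.exV = ∅ := by
  simp [listRules, ERule.exV, atomsVars, Set.sdiff_eq_empty, Set.subset_def]

theorem exV_eq_empty_of_mem_runRules {c : Code} : ∀ r ∈ runRules c, r.exV = ∅ := by
  cases c <;> simp [runRules, runBodies, ERule.exV, atomsVars, Set.sdiff_eq_empty, Set.subset_def]

theorem mem_eval_zero' {l w : List ℕ} : w ∈ Code.zero'.eval l ↔ w = 0 :: l := by simp

theorem mem_eval_succ {l w : List ℕ} : w ∈ Code.succ.eval l ↔ w = [l.headI + 1] := by simp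

theorem mem_eval_tail {l w : List ℕ} : w ∈ Code.tail.eval l ↔ w = l.tail := by simp

theorem mem_eval_cons {f g : Code} {l w : List ℕ} : w ∈ (f.cons g).eval l ↔
    ∃ v ∈ f.eval l, ∃ t ∈ g.eval l, v.headI :: t = w := by
  simp [eq_comm]

theorem mem_eval_comp {f g : Code} {l w : List ℕ} : w ∈ (f.comp g).eval l ↔
    ∃ v ∈ g.eval l, w ∈ f.eval v := by
  rw [Code.comp_eval]
  exact Part.mem_bind_iff

/-- One iteration of the loop `Code.fix f`, which is left on `Sum.inl`. -/
def fixStep (f : Code) : List ℕ →. List ℕ ⊕ List ℕ := fun l =>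
  (f.eval l).map fun v => if v.headI = 0 then .inl v.tail else .inr v.tail

theorem eval_fix (f : Code) : f.fix.eval = PFun.fix (fixStep f) := Code.fix_eval f

theorem mem_eval_case {f g : Code} {l w : List ℕ} : w ∈ (f.case g).eval l ↔
    l.headI = 0 ∧ w ∈ f.eval l.tail ∨ ∃ n, l.headI = n + 1 ∧ w ∈ g.eval (n :: l.tail) := by
  simp only [Code.case_eval]
  cases l.headI <;> simp

theorem inl_mem_fixStep {f : Code} {l w : List ℕ} :
    .inl w ∈ fixStep f l ↔ ∃ v ∈ f.eval l, v.headI = 0 ∧ v.tail = w := by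
  refine (Part.mem_map_iff _).trans (exists_congr fun v => and_congr_right fun _ => ?_)
  split <;> simp [*]

theorem inr_mem_fixStep {f : Code} {l l' : List ℕ} :
    .inr l' ∈ fixStep f l ↔ ∃ v ∈ f.eval l, v.headI ≠ 0 ∧ v.tail = l' := by
  refine (Part.mem_map_iff _).trans (exists_congr fun v => and_congr_right fun _ => ?_)
  split <;> simp [*]

theorem tail_mem_eval_fix {f : Code} {l v : List ℕ} (hv : v ∈ f.eval l) (h : v.headI = 0) :
    v.tail ∈ f.fix.eval l :=
  eval_fix f ▸ PFun.mem_fix_iff.2 (.inl (inl_mem_fixStep.2 ⟨v, hv, h, rfl⟩))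

theorem mem_eval_fix_of_mem_eval_fix_tail {f : Code} {l v w : List ℕ} (hv : v ∈ f.eval l)
    (h : v.headI ≠ 0) (hw : w ∈ f.fix.eval v.tail) : w ∈ f.fix.eval l := by
  rw [eval_fix] at hw ⊢
  exact PFun.mem_fix_iff.2 (.inr ⟨_, inr_mem_fixStep.2 ⟨v, hv, h, rfl⟩, hw⟩)

/-! ## Soundness of the simulation -/

/-- The intended meaning of the predicates; a list also stands for the number at its head. -/
def ListPred.Meaning : ListPred → List (List ℕ) → Prop
  | elem, [_] => True
  | nil, [l] => l = []
  | zero, [x] => x.headI = 0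
  | succ, [x, y] => y.headI = x.headI + 1
  | cons, [x, t, l] => l = x.headI :: t
  | head, [l, x] => x.headI = l.headI
  | tail, [l, t] => t = l.tail
  | run c, [v, w] => w ∈ c.eval v
  | _, _ => False

/-- The intended model of the rules and of the facts for the input `[n]`. -/
abbrev standardModel (n : ℕ) : Interp where
  Dom := List ℕ
  inh := ⟨[]⟩
  rel q ls := ∃ P : ListPred, encode P = q ∧ P.Meaning ls
  cst
    | 0 => [n]
    | 1 => []
    | k + 2 => [k]

@[simp]
theorem holds_standardModel {n : ℕ} {P : ListPred} {ls : List (List ℕ)} :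
    (standardModel n).Holds P ls ↔ P.Meaning ls := by
  simp [Interp.Holds]

theorem satFacts_standardModel (n : ℕ) : satFacts (standardModel n) (inputFacts n) := by
  intro ν
  simp [inputFacts, Meaning]

theorem sat_standardModel_of_mem_creationRules (n : ℕ) :
    ∀ r ∈ creationRules, r.sat (standardModel n) := by
  simp only [creationRules, List.forall_mem_cons]
  refine ⟨fun ν _ => ⟨fun v => if v = 0 then ν 0 else [(ν 0).headI + 1], ?_, ?_⟩,
    fun ν _ => ⟨fun v => if v < 2 then ν v else (ν 0).headI :: ν 1, ?_, ?_⟩, by simp⟩ <;>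
    simp [Meaning, atomsVars]

theorem sat_standardModel_of_mem_listRules (n : ℕ) : ∀ r ∈ listRules, r.sat (standardModel n) := by
  intro r hr
  refine ERule.sat_of_forall_valuation fun ν => ?_
  revert r
  simp +contextual [listRules, Meaning]

theorem sat_standardModel_of_mem_runRules (n : ℕ) (c : Code) :
    ∀ r ∈ runRules c, r.sat (standardModel n) := by
  intro r hr
  refine ERule.sat_of_forall_valuation fun ν => ?_
  revert r
  cases c <;>
    simp only [runRules, runBodies, List.map_cons, List.map_nil, List.forall_mem_cons,
      List.not_mem_nil, IsEmpty.forall_iff, implies_true, and_true, sat_atom, holds_standardModel,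
      Meaning, mem_eval_zero', mem_eval_succ, mem_eval_tail, mem_eval_cons, mem_eval_comp,
      mem_eval_case] <;>
    grind [tail_mem_eval_fix, mem_eval_fix_of_mem_eval_fix_tail]

theorem sat_standardModel_of_mem_programRules (n : ℕ) (c : Code) :
    ∀ r ∈ programRules c, r.sat (standardModel n) := by
  simp only [programRules, List.forall_mem_append, List.forall_mem_flatMap]
  exact ⟨⟨sat_standardModel_of_mem_creationRules n, sat_standardModel_of_mem_listRules n⟩,
    fun c' _ => sat_standardModel_of_mem_runRules n c'⟩

/-! ## Completeness of the simulation -/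

/-- The closure properties expressed by the rules on lists, in a model that contains zero and the
empty list. -/
structure Interp.IsListModel (I : Interp) : Prop where
  exists_nil : ∃ d, I.Holds nil [d]
  exists_zero : ∃ d, I.Holds zero [d]
  exists_succ : ∀ x, I.Holds elem [x] → ∃ y, I.Holds succ [x, y]
  exists_cons : ∀ x t, I.Holds elem [x] → I.Holds elem [t] → ∃ d, I.Holds cons [x, t, d]
  elem_of_nil : ∀ d, I.Holds nil [d] → I.Holds elem [d]
  elem_of_zero : ∀ x, I.Holds zero [x] → I.Holds elem [x]
  elem_of_succ : ∀ x y, I.Holds succ [x, y] → I.Holds elem [y]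
  elem_of_cons : ∀ x t d, I.Holds cons [x, t, d] → I.Holds elem [d]
  head_of_nil : ∀ d x, I.Holds nil [d] → I.Holds zero [x] → I.Holds head [d, x]
  head_of_cons : ∀ x t d, I.Holds cons [x, t, d] → I.Holds head [d, x]
  tail_of_nil : ∀ d, I.Holds nil [d] → I.Holds tail [d, d]
  tail_of_cons : ∀ x t d, I.Holds cons [x, t, d] → I.Holds tail [d, t]

/-- The elements standing for a number. -/
inductive Interp.IsNum (I : Interp) : ℕ → I.Dom → Prop
  | zero {x : I.Dom} : I.Holds zero [x] → IsNum I 0 x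
  | succ {n : ℕ} {x y : I.Dom} : IsNum I n x → I.Holds succ [x, y] → IsNum I (n + 1) y

/-- The elements standing for a list of numbers. -/
inductive Interp.IsList (I : Interp) : List ℕ → I.Dom → Prop
  | nil {d : I.Dom} : I.Holds nil [d] → IsList I [] d
  | cons {n : ℕ} {l : List ℕ} {x t d : I.Dom} :
    I.IsNum n x → IsList I l t → I.Holds cons [x, t, d] → IsList I (n :: l) d

/-- The input-output relation of a program is contained in the one defined by its rules. -/
def Interp.Computes (I : Interp) (c : Code) : Prop :=
  ∀ ⦃l w : List ℕ⦄ ⦃d : I.Dom⦄, I.IsList l d → w ∈ c.eval l →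
    ∃ e, I.IsList w e ∧ I.Holds (run c) [d, e]

section

variable {I : Interp} {c f g : Code} {n : ℕ} {l : List ℕ} {x t d : I.Dom}

theorem satFacts_inputFacts_iff : satFacts I (inputFacts n) ↔
    I.Holds nil [I.cst 1] ∧ I.Holds zero [I.cst 2] ∧
      I.Holds cons [I.cst (n + 2), I.cst 1, I.cst 0] ∧
      ∀ k < n, I.Holds succ [I.cst (k + 2), I.cst (k + 3)] := by
  have := I.inh
  simp [satFacts, inputFacts]

theorem exists_succ_of_sat (hcreate : ∀ r ∈ creationRules, r.sat I) (x : I.Dom)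
    (hx : I.Holds elem [x]) : ∃ y, I.Holds succ [x, y] := by
  obtain ⟨ν, hagree, hhead⟩ := hcreate _ List.mem_cons_self (fun _ => x) (by simpa using hx)
  have hx : ν 0 = x := hagree 0 (by simp [atomsVars])
  exact ⟨ν 1, by simpa [hx] using hhead⟩

theorem exists_cons_of_sat (hcreate : ∀ r ∈ creationRules, r.sat I) (x t : I.Dom)
    (hx : I.Holds elem [x]) (ht : I.Holds elem [t]) : ∃ d, I.Holds cons [x, t, d] := by
  obtain ⟨ν, hagree, hhead⟩ := hcreate _ (List.mem_cons_of_mem _ List.mem_cons_self)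
    (fun k => [x, t].getD k x) (by simp [hx, ht])
  have hx : ν 0 = x := hagree 0 (by simp [atomsVars])
  have ht : ν 1 = t := hagree 1 (by simp [atomsVars])
  exact ⟨ν 2, by simpa [hx, ht] using hhead⟩

theorem isListModel_of_sat (hF : satFacts I (inputFacts n)) (hcreate : ∀ r ∈ creationRules, r.sat I)
    (hlist : ∀ r ∈ listRules, r.sat I) : I.IsListModel := by
  obtain ⟨hnil, hzero, -⟩ := satFacts_inputFacts_iff.1 hF
  have hclosed := fun r hr => (hlist r hr).head_of_exV_eq_empty (exV_eq_empty_of_mem_listRules r hr)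
  simp only [listRules, List.forall_mem_cons, List.not_mem_nil, IsEmpty.forall_iff, implies_true,
    and_true, sat_atom] at hclosed
  obtain ⟨h₁, h₂, h₃, h₄, h₅, h₆, h₇, h₈⟩ := hclosed
  exact
    { exists_nil := ⟨_, hnil⟩
      exists_zero := ⟨_, hzero⟩
      exists_succ := exists_succ_of_sat hcreate
      exists_cons := exists_cons_of_sat hcreate
      elem_of_nil := fun d => h₁ fun _ => d
      elem_of_zero := fun x => h₂ fun _ => x
      elem_of_succ := fun x y => h₃ fun k => [x, y].getD k x
      elem_of_cons := fun x t d => h₄ fun k => [x, t, d].getD k x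
      head_of_nil := fun d x hd hx => h₅ (fun k => [d, x].getD k d) ⟨hd, hx⟩
      head_of_cons := fun x t d => h₆ fun k => [x, t, d].getD k x
      tail_of_nil := fun d => h₇ fun _ => d
      tail_of_cons := fun x t d => h₈ fun k => [x, t, d].getD k x }

namespace Interp.IsListModel

variable (hI : I.IsListModel)
include hI

theorem elem_of_isNum (hx : I.IsNum n x) : I.Holds elem [x] := by
  cases hx with
  | zero h => exact hI.elem_of_zero _ h
  | succ _ h => exact hI.elem_of_succ _ _ h

theorem elem_of_isList (hd : I.IsList l d) : I.Holds elem [d] := by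
  cases hd with
  | nil h => exact hI.elem_of_nil _ h
  | cons _ _ h => exact hI.elem_of_cons _ _ _ h

theorem exists_isNum_succ (hx : I.IsNum n x) : ∃ y, I.IsNum (n + 1) y ∧ I.Holds succ [x, y] :=
  (hI.exists_succ x (hI.elem_of_isNum hx)).imp fun _ h => ⟨hx.succ h, h⟩

theorem exists_isList_cons (hx : I.IsNum n x) (ht : I.IsList l t) :
    ∃ d, I.IsList (n :: l) d ∧ I.Holds cons [x, t, d] :=
  (hI.exists_cons x t (hI.elem_of_isNum hx) (hI.elem_of_isList ht)).imp fun _ h => ⟨ht.cons hx h, h⟩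

theorem exists_isNum_head (hd : I.IsList l d) : ∃ x, I.IsNum l.headI x ∧ I.Holds head [d, x] := by
  cases hd with
  | nil hd => exact hI.exists_zero.imp fun x hx => ⟨.zero hx, hI.head_of_nil d x hd hx⟩
  | cons hx _ hd => exact ⟨_, hx, hI.head_of_cons _ _ d hd⟩

theorem exists_isList_tail (hd : I.IsList l d) : ∃ t, I.IsList l.tail t ∧ I.Holds tail [d, t] := by
  cases hd with
  | nil hd => exact ⟨d, .nil hd, hI.tail_of_nil d hd⟩
  | cons _ ht hd => exact ⟨_, ht, hI.tail_of_cons _ _ d hd⟩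

end Interp.IsListModel

theorem holds_run_of_mem_runBodies (hc : ∀ r ∈ runRules c, r.sat I) {B : List FAtom}
    (hB : B ∈ runBodies c) (ν : ℕ → I.Dom) (hν : ∀ a ∈ B, a.sat I ν) :
    I.Holds (run c) [ν 0, ν 1] := by
  have hr : ⟨B, [(run c).atom [0, 1]]⟩ ∈ runRules c := List.mem_map.2 ⟨B, hB, rfl⟩
  simpa using (hc _ hr).head_of_exV_eq_empty (exV_eq_empty_of_mem_runRules _ hr) ν hν

-- In the valuations `fun k => [d, e, …].getD k d` below, the list gives the values of the variables
-- `0, 1, …` of the rule body, and the default value `d` plays no role.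

theorem computes_zero' (hI : I.IsListModel) (hc : ∀ r ∈ runRules .zero', r.sat I) :
    I.Computes .zero' := by
  intro l w d hd hw
  obtain rfl := mem_eval_zero'.1 hw
  obtain ⟨z, hz⟩ := hI.exists_zero
  obtain ⟨e, he, hcons⟩ := hI.exists_isList_cons (.zero hz) hd
  refine ⟨e, he, holds_run_of_mem_runBodies hc List.mem_cons_self
    (fun k => [d, e, z].getD k d) ?_⟩
  simp [*]

theorem computes_succ (hI : I.IsListModel) (hc : ∀ r ∈ runRules .succ, r.sat I) :
    I.Computes .succ := by
  intro l w d hd hw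
  obtain rfl := mem_eval_succ.1 hw
  obtain ⟨x, hx, hhead⟩ := hI.exists_isNum_head hd
  obtain ⟨y, hy, hsucc⟩ := hI.exists_isNum_succ hx
  obtain ⟨b, hb⟩ := hI.exists_nil
  obtain ⟨e, he, hcons⟩ := hI.exists_isList_cons hy (.nil hb)
  refine ⟨e, he, holds_run_of_mem_runBodies hc List.mem_cons_self
    (fun k => [d, e, x, y, b].getD k d) ?_⟩
  simp [*]

theorem computes_tail (hI : I.IsListModel) (hc : ∀ r ∈ runRules .tail, r.sat I) :
    I.Computes .tail := by
  intro l w d hd hw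
  obtain rfl := mem_eval_tail.1 hw
  obtain ⟨e, he, htail⟩ := hI.exists_isList_tail hd
  refine ⟨e, he, holds_run_of_mem_runBodies hc List.mem_cons_self (fun k => [d, e].getD k d) ?_⟩
  simp [*]

theorem computes_cons (hI : I.IsListModel) (hc : ∀ r ∈ runRules (.cons f g), r.sat I)
    (hf : I.Computes f) (hg : I.Computes g) : I.Computes (.cons f g) := by
  intro l w d hd hw
  obtain ⟨v, hv, v', hv', rfl⟩ := mem_eval_cons.1 hw
  obtain ⟨a, ha, hrunf⟩ := hf hd hv
  obtain ⟨x, hx, hhead⟩ := hI.exists_isNum_head ha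
  obtain ⟨t, ht, hrung⟩ := hg hd hv'
  obtain ⟨e, he, hcons⟩ := hI.exists_isList_cons hx ht
  refine ⟨e, he, holds_run_of_mem_runBodies hc List.mem_cons_self
    (fun k => [d, e, a, x, t].getD k d) ?_⟩
  simp [*]

theorem computes_comp (hc : ∀ r ∈ runRules (.comp f g), r.sat I)
    (hf : I.Computes f) (hg : I.Computes g) : I.Computes (.comp f g) := by
  intro l w d hd hw
  obtain ⟨v, hv, hw⟩ := mem_eval_comp.1 hw
  obtain ⟨a, ha, hrung⟩ := hg hd hv
  obtain ⟨e, he, hrunf⟩ := hf ha hw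
  refine ⟨e, he, holds_run_of_mem_runBodies hc List.mem_cons_self (fun k => [d, e, a].getD k d) ?_⟩
  simp [*]

theorem computes_case (hI : I.IsListModel) (hc : ∀ r ∈ runRules (.case f g), r.sat I)
    (hf : I.Computes f) (hg : I.Computes g) : I.Computes (.case f g) := by
  intro l w d hd hw
  obtain ⟨x, hx, hhead⟩ := hI.exists_isNum_head hd
  obtain ⟨t, ht, htail⟩ := hI.exists_isList_tail hd
  obtain ⟨hl, hw⟩ | ⟨n, hl, hw⟩ := mem_eval_case.1 hw <;> rw [hl] at hx
  · obtain ⟨hzero⟩ := hx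
    obtain ⟨e, he, hrunf⟩ := hf ht hw
    refine ⟨e, he, holds_run_of_mem_runBodies hc List.mem_cons_self
      (fun k => [d, e, x, t].getD k d) ?_⟩
    simp [*]
  · obtain _ | @⟨_, y, _, hy, hsucc⟩ := hx
    obtain ⟨a, ha, hcons⟩ := hI.exists_isList_cons hy ht
    obtain ⟨e, he, hrung⟩ := hg ha hw
    refine ⟨e, he, holds_run_of_mem_runBodies hc (List.mem_cons_of_mem _ List.mem_cons_self)
      (fun k => [d, e, x, y, t, a].getD k d) ?_⟩
    simp [*]

theorem computes_fix (hI : I.IsListModel) (hc : ∀ r ∈ runRules (.fix f), r.sat I)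
    (hf : I.Computes f) : I.Computes (.fix f) := by
  intro l w d hd hw
  rw [eval_fix] at hw
  refine PFun.fixInduction' (C := fun l => ∀ d, I.IsList l d →
    ∃ e, I.IsList w e ∧ I.Holds (run (.fix f)) [d, e]) hw ?_ ?_ d hd
  · intro l hl d hd
    obtain ⟨v, hv, hv0, rfl⟩ := inl_mem_fixStep.1 hl
    obtain ⟨a, ha, hrun⟩ := hf hd hv
    obtain ⟨x, hx, hhead⟩ := hI.exists_isNum_head ha
    rw [hv0] at hx
    obtain ⟨hzero⟩ := hx
    obtain ⟨e, he, htail⟩ := hI.exists_isList_tail ha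
    refine ⟨e, he, holds_run_of_mem_runBodies hc List.mem_cons_self
      (fun k => [d, e, a, x].getD k d) ?_⟩
    simp [*]
  · intro l l' _ hl ih d hd
    obtain ⟨v, hv, hv0, rfl⟩ := inr_mem_fixStep.1 hl
    obtain ⟨n, hn⟩ := Nat.exists_eq_succ_of_ne_zero hv0
    obtain ⟨a, ha, hrun⟩ := hf hd hv
    obtain ⟨x, hx, hhead⟩ := hI.exists_isNum_head ha
    rw [hn] at hx
    obtain _ | @⟨_, y, _, hy, hsucc⟩ := hx
    obtain ⟨t, ht, htail⟩ := hI.exists_isList_tail ha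
    obtain ⟨e, he, hloop⟩ := ih t ht
    refine ⟨e, he, holds_run_of_mem_runBodies hc (List.mem_cons_of_mem _ List.mem_cons_self)
      (fun k => [d, e, a, x, y, t].getD k d) ?_⟩
    simp [*]

theorem computes_of_sat (hI : I.IsListModel) (hc : ∀ c' ∈ subcodes c, ∀ r ∈ runRules c', r.sat I) :
    I.Computes c := by
  induction c <;>
    simp only [subcodes, List.forall_mem_cons, List.forall_mem_append, List.not_mem_nil,
      IsEmpty.forall_iff, implies_true, and_true] at hc
  case zero' => exact computes_zero' hI hc
  case succ => exact computes_succ hI hc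
  case tail => exact computes_tail hI hc
  case cons ihf ihg => exact computes_cons hI hc.1 (ihf hc.2.1) (ihg hc.2.2)
  case comp ihf ihg => exact computes_comp hc.1 (ihf hc.2.1) (ihg hc.2.2)
  case case ihf ihg => exact computes_case hI hc.1 (ihf hc.2.1) (ihg hc.2.2)
  case fix ihf => exact computes_fix hI hc.1 (ihf hc.2)

theorem isList_input (hF : satFacts I (inputFacts n)) : I.IsList [n] (I.cst 0) := by
  obtain ⟨hnil, hzero, hcons, hsucc⟩ := satFacts_inputFacts_iff.1 hF
  have hnum : ∀ k ≤ n, I.IsNum k (I.cst (k + 2)) := by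
    intro k hk
    induction k with
    | zero => exact .zero hzero
    | succ k ih => exact (ih (by lia)).succ (hsucc k hk)
  exact (Interp.IsList.nil hnil).cons (hnum n le_rfl) hcons

end

theorem entails_haltsQuery_iff (n : ℕ) (c : Code) :
    entails (inputFacts n) (programRules c) [haltsQuery c] ↔ (c.eval [n]).Dom := by
  simp only [entails, satCQ, List.forall_mem_singleton, sat_haltsQuery]
  constructor
  · intro h
    obtain ⟨ν, hν⟩ := h _ (satFacts_standardModel n) (sat_standardModel_of_mem_programRules n c)
    exact Part.dom_iff_mem.2 ⟨_, holds_standardModel.1 hν⟩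
  · intro hdom I hF hR
    simp only [programRules, List.forall_mem_append, List.forall_mem_flatMap] at hR
    obtain ⟨⟨hcreate, hlist⟩, hrun⟩ := hR
    obtain ⟨w, hw⟩ := Part.dom_iff_mem.1 hdom
    have hmodel := isListModel_of_sat hF hcreate hlist
    obtain ⟨e, -, he⟩ := computes_of_sat hmodel hrun (isList_input hF) hw
    exact ⟨fun _ => e, he⟩

/-! ## Undecidability -/

/-- Decidability of `F, Rs ⊨ Q` for fixed rules `Rs` and atomic query `Q`, only the fact base `F`
being part of the input. -/
def AtomicCQDecidable (Rs : List ERule) (Q : FAtom) : Prop :=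
  ∃ f : List FAtom → Bool, Computable f ∧
    ∀ F, isFactBase F → (f F = true ↔ entails F Rs [Q])

theorem FTerm.primrec_const : Primrec FTerm.const :=
  (Primrec.of_equiv_symm (e := FTerm.equivSum)).comp Primrec.sumInr

theorem FAtom.primrec_mk : Primrec₂ FAtom.mk :=
  Primrec.of_equiv_symm (e := FAtom.equivProd)

theorem FAtom.primrec_equivProd : Primrec FAtom.equivProd :=
  Primrec.of_equiv (e := FAtom.equivProd)

theorem primrec_linkFacts : Primrec linkFacts := by
  have hatom : Primrec fun a : FAtom => (⟨a.pred + 1, anchor :: a.args⟩ : FAtom) :=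
    FAtom.primrec_mk.comp (Primrec.succ.comp (Primrec.fst.comp FAtom.primrec_equivProd))
      (Primrec.list_cons.comp (Primrec.const anchor) (Primrec.snd.comp FAtom.primrec_equivProd))
  exact Primrec.list_cons.comp (Primrec.const _) (Primrec.list_map .id (hatom.comp Primrec.snd).to₂)

theorem ListPred.primrec_fact (P : ListPred) : Primrec P.fact :=
  FAtom.primrec_mk.comp (Primrec.const _)
    (Primrec.list_map .id (FTerm.primrec_const.comp Primrec.snd).to₂)

theorem primrec_inputFacts : Primrec inputFacts := by
  have hadd (k : ℕ) : Primrec fun n : ℕ => n + k := Primrec.nat_add.comp .id (.const k)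
  have hcons : Primrec fun n => cons.fact [n + 2, 1, 0] := (primrec_fact cons).comp
    (Primrec.list_cons.comp (hadd 2) (Primrec.const _))
  have hsucc : Primrec fun k => succ.fact [k + 2, k + 3] := (primrec_fact succ).comp
    (Primrec.list_cons.comp (hadd 2) (Primrec.list_cons.comp (hadd 3) (Primrec.const _)))
  exact Primrec.list_cons.comp (Primrec.const _) (Primrec.list_cons.comp (Primrec.const _)
    (Primrec.list_cons.comp hcons
      (Primrec.list_map Primrec.list_range (hsucc.comp Primrec.snd).to₂)))

theorem exists_code_dom_iff {g : ℕ →. ℕ} (hg : Partrec g) :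
    ∃ u : Code, ∀ n, (u.eval [n]).Dom ↔ (g n).Dom := by
  obtain ⟨u, hu⟩ := Code.exists_code (Nat.Partrec'.part_iff₁.2 hg)
  exact ⟨u, fun n => iff_of_eq (congrArg Part.Dom (hu (n ::ᵥ .nil)))⟩

theorem exists_universal_code :
    ∃ u : Code, ∀ c : Nat.Partrec.Code, (u.eval [encode c]).Dom ↔ (c.eval 0).Dom := by
  obtain ⟨u, hu⟩ := exists_code_dom_iff (Nat.Partrec.Code.eval_part.comp
    (Computable.ofNat Nat.Partrec.Code) (Computable.const 0))
  exact ⟨u, fun c => by rw [hu, Denumerable.ofNat_encode]⟩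

theorem exists_not_atomicCQDecidable : ∃ Rs Q, ¬ AtomicCQDecidable Rs Q := by
  obtain ⟨u, hu⟩ := exists_universal_code
  refine ⟨programRules u, haltsQuery u, fun ⟨f, hf, hdec⟩ => ComputablePred.halting_problem 0 ?_⟩
  refine ComputablePred.computable_iff.2 ⟨fun c => f (inputFacts (encode c)),
    hf.comp (primrec_inputFacts.comp Primrec.encode).to_comp, funext fun c => propext ?_⟩
  rw [hdec _ (isFactBase_inputFacts _), entails_haltsQuery_iff, hu]

theorem isFactBase_linkFacts {F : List FAtom} (hF : isFactBase F) : isFactBase (linkFacts F) := by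
  simp only [isFactBase, linkFacts, List.forall_mem_cons, List.forall_mem_map, FAtom.isGround,
    linkAtom]
  exact ⟨by simp [anchor], fun a ha => ⟨⟨0, rfl⟩, hF a ha⟩⟩

theorem AtomicCQDecidable.of_link {Rs : List ERule} {Q : FAtom}
    (h : AtomicCQDecidable (Rs.map ERule.link ++ [transRule 0]) (Q.withTag .fresh)) :
    AtomicCQDecidable Rs Q := by
  obtain ⟨f, hf, hdec⟩ := h
  refine ⟨fun F => f (linkFacts F), hf.comp primrec_linkFacts.to_comp, fun F hF => ?_⟩
  rw [hdec _ (isFactBase_linkFacts hF), entails_link_iff]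

theorem agrd_plus_trans_atomicCQ_undecidable_general :
    ∃ Rs Rt Q, isAGRD Rs ∧ isTransitivityRule Rt ∧ ¬ AtomicCQDecidable (Rs ++ [Rt]) Q := by
  obtain ⟨Rs, Q, h⟩ := exists_not_atomicCQDecidable
  exact ⟨Rs.map ERule.link, transRule 0, Q.withTag .fresh, ERule.isAGRD_map_link Rs,
    isTransitivityRule_transRule 0, mt AtomicCQDecidable.of_link h⟩

/-- Atomic CQ entailment over aGRD+trans knowledge bases is undecidable,
even with a single transitivity rule: no computable (Boolean-valued) function correctly
decides, for every fact base `F`, every aGRD rule set `Rs`, every transitivity rule `Rt`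
and every atomic CQ `Q`, whether `F, Rs ∪ {Rt} ⊨ Q`. -/
theorem agrd_plus_trans_atomicCQ_undecidable :
    ¬ ∃ f : List FAtom × List ERule × ERule × FAtom → Bool, Computable f ∧
      ∀ (F : List FAtom) (Rs : List ERule) (Rt : ERule) (Q : FAtom),
        isFactBase F → isAGRD Rs → isTransitivityRule Rt →
        (f (F, Rs, Rt, Q) = true ↔ entails F (Rs ++ [Rt]) [Q]) := by
  rintro ⟨f, hf, hdec⟩
  obtain ⟨Rs, Rt, Q, hRs, hRt, hQ⟩ := agrd_plus_trans_atomicCQ_undecidable_general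
  exact hQ ⟨fun F => f (F, Rs, Rt, Q), hf.comp (Computable.id.pair (Computable.const _)),
    fun F hF => hdec F Rs Rt Q hF hRs hRt⟩
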